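/- Every supersymmetric polynomial in the normalised Jucys-Murphy elements N_1,...,N_r lies in the center of the partition algebra A_r(δ), for arbitrary δ ∈ ℂ. -/

import Mathlib

open MvPolynomial

/-- A polynomial `p ∈ ℂ[x₁,…,x_r]` (variables indexed by `1,…,r ⊆ ℕ`) is
*supersymmetric* if it is symmetric separately in the odd-indexed and the
even-indexed variables, and satisfies the cancellation property: substituting
`x₁ = y`, `x₂ = -y` yields a polynomial independent of `y`. -/
def IsSupersymmetric (r : ℕ) (p : MvPolynomial ℕ ℂ) : Prop :=
  p ∈ MvPolynomial.supported ℂ (Set.Icc 1 r) ∧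
  (∀ π : Equiv.Perm ℕ, (∀ i, π i % 2 = i % 2) → (∀ i, i ∉ Set.Icc 1 r → π i = i) →
      rename π p = p) ∧
  (∀ y y' : ℂ,
    bind₁ (fun i => if i = 1 then C y else if i = 2 then C (-y) else X i) p =
      bind₁ (fun i => if i = 1 then C y' else if i = 2 then C (-y') else X i) p)

/-- Evaluation of a multivariate polynomial at a family of pairwise-commuting
elements of a (possibly noncommutative) ring. -/
noncomputable def mvEvalAt {A : Type*} [Ring A] [Algebra ℂ A]
    (N : ℕ → A) (p : MvPolynomial ℕ ℂ) : A :=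
  ∑ m ∈ p.support,
    p.coeff m • ((m.support.sort (· ≤ ·)).map (fun i => N i ^ m i)).prod

/-- Data presenting the partition algebra `A_r(δ)`: a `ℂ`-algebra generated by the
elements `e i` and `s i`, together with Enyang's elements `σ i` and the
Jucys–Murphy elements `L i` (with normalisations `N i = L i - δ/2`), satisfying
the relations of Enyang used in the paper. -/
structure PartitionAlgebraData (A : Type*) [Ring A] [Algebra ℂ A] (δ : ℂ) (r : ℕ) where
  e : ℕ → A
  σ : ℕ → A
  s : ℕ → A
  L : ℕ → A
  N : ℕ → A
  N_def : ∀ j, N j = L j - algebraMap ℂ A (δ / 2)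
  gen : Algebra.adjoin ℂ
      ({a | ∃ i, 1 ≤ i ∧ i ≤ r - 1 ∧ a = e i} ∪
        {a | ∃ i, 1 ≤ i ∧ 2 * i ≤ r - 2 ∧ a = s i}) = ⊤
  L_comm : ∀ i j, L i * L j = L j * L i
  e_comm_N : ∀ i j, 1 ≤ i → i ≤ r - 1 → j ≠ i → j ≠ i + 1 → e i * N j = N j * e i
  s_comm_N : ∀ i j, 1 ≤ i → 2 * i ≤ r - 2 →
    j ≠ 2 * i - 1 → j ≠ 2 * i → j ≠ 2 * i + 1 → j ≠ 2 * i + 2 → s i * N j = N j * s i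
  σodd_comm_N : ∀ i j, 2 ≤ 2 * i + 1 → 2 * i + 1 ≤ r - 1 →
    j ≠ 2 * i → j ≠ 2 * i + 1 → j ≠ 2 * i + 2 → σ (2 * i + 1) * N j = N j * σ (2 * i + 1)
  σeven_comm_N : ∀ i j, 2 ≤ 2 * i → 2 * i ≤ r - 1 →
    j ≠ 2 * i - 1 → j ≠ 2 * i → j ≠ 2 * i + 1 → σ (2 * i) * N j = N j * σ (2 * i)
  σ_sq : ∀ i, 2 ≤ i → i ≤ r - 1 → σ i * σ i = 1
  σσ_s : ∀ i, 2 ≤ 2 * i → 2 * i + 1 ≤ r - 1 →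
    σ (2 * i) * σ (2 * i + 1) = s i ∧ σ (2 * i + 1) * σ (2 * i) = s i
  σ_e_even : ∀ i, 2 ≤ 2 * i → 2 * i ≤ r - 1 →
    σ (2 * i) * e (2 * i) = e (2 * i) ∧ e (2 * i) * σ (2 * i) = e (2 * i)
  σ_e_odd : ∀ i, 2 * i + 1 ≤ r - 1 → 1 ≤ 2 * i →
    σ (2 * i + 1) * e (2 * i) = e (2 * i) ∧ e (2 * i) * σ (2 * i + 1) = e (2 * i)
  e_N_anti : ∀ i, 1 ≤ i → i ≤ r - 1 →
    e i * N i = -(e i * N (i + 1)) ∧ N i * e i = -(N (i + 1) * e i)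
  mixed_even : ∀ i, 1 ≤ i → 2 * i ≤ r - 1 →
    σ (2 * i) * e (2 * i - 1) * e (2 * i) = L (2 * i) * e (2 * i) ∧
    e (2 * i) * e (2 * i - 1) * σ (2 * i) = e (2 * i) * L (2 * i)
  mixed_odd : ∀ i, 1 ≤ i → 2 * i + 1 ≤ r - 1 →
    σ (2 * i + 1) * e (2 * i + 1) * e (2 * i) = L (2 * i) * e (2 * i) ∧
    e (2 * i) * e (2 * i + 1) * σ (2 * i + 1) = e (2 * i) * L (2 * i)
  cox_odd : ∀ i, 1 ≤ i → 2 * i + 1 ≤ r - 1 →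
    N (2 * i + 1) = s i * N (2 * i - 1) * s i - σ (2 * i) * e (2 * i - 1) * e (2 * i)
      - e (2 * i) * e (2 * i - 1) * σ (2 * i)
      + e (2 * i) * e (2 * i - 1) * σ (2 * i) * e (2 * i - 1) * e (2 * i) + σ (2 * i)
  cox_even : ∀ i, 1 ≤ i → 2 * i + 2 ≤ r →
    N (2 * i + 2) = s i * N (2 * i) * s i - σ (2 * i + 1) * e (2 * i - 1) * e (2 * i)
      - e (2 * i) * e (2 * i - 1) * σ (2 * i + 1)
      + e (2 * i) * e (2 * i + 1) * σ (2 * i + 1) * e (2 * i + 1) * e (2 * i)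
      + σ (2 * i + 1)

theorem nc_shared {A : Type*} [Ring A] {a b c g e f h σ τ s D : A}
    (hσ : σ * σ = 1) (hτ : τ * τ = 1) (h1 : σ * τ = s) (h2 : τ * σ = s)
    (σe : σ * e = e) (eσ : e * σ = e) (τe : τ * e = e) (eτ : e * τ = e)
    (σg : σ * g = g * σ) (τa : τ * a = a * τ)
    (m1 : σ * f * e = (b + D) * e) (m2 : e * f * σ = e * (b + D))
    (m3 : τ * h * e = (b + D) * e) (m4 : e * h * τ = e * (b + D))
    (hc : c = s * a * s - σ * f * e - e * f * σ + e * f * σ * f * e + σ)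
    (hg : g = s * b * s - τ * f * e - e * f * τ + e * h * τ * h * e + τ) :
    (σ * b - b * σ = f * e + e * (b + D) - (b + D) * e - e * f) ∧
    (σ * c = a * σ + 1 - f * e - e * (b + D) + e * (b + D) * f * e) ∧
    (c * σ = σ * a + 1 - (b + D) * e - e * f + e * (b + D) * f * e) ∧
    (τ * c - c * τ = (b + D) * e + e * h - h * e - e * (b + D)) ∧
    (τ * g = b * τ + 1 - (b + D) * e - e * h + e * (b + D) * h * e) ∧
    (g * τ = τ * b + 1 - h * e - e * (b + D) + e * (b + D) * h * e) := by
  have hs1 : σ * s = τ := by rw [← h1, ← mul_assoc, hσ, one_mul]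
  have hs2 : s * σ = τ := by rw [← h2, mul_assoc, hσ, mul_one]
  have hs3 : τ * s = σ := by rw [← h2, ← mul_assoc, hτ, one_mul]
  have hs4 : s * τ = σ := by rw [← h1, mul_assoc, hτ, mul_one]
  have fe : f * e = σ * ((b + D) * e) := by rw [← m1, mul_assoc, ← mul_assoc σ, hσ, one_mul]
  have ef : e * f = e * (b + D) * σ := by rw [← m2, mul_assoc (e*f), hσ, mul_one]
  have he : h * e = τ * ((b + D) * e) := by rw [← m3, mul_assoc, ← mul_assoc τ, hτ, one_mul]
  have eh : e * h = e * (b + D) * τ := by rw [← m4, mul_assoc (e*h), hτ, mul_one]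
  have sfe : s * (f * e) = h * e := by rw [fe, ← mul_assoc, hs2, he]
  have efs : e * f * s = e * h := by rw [ef, mul_assoc, hs1, eh]
  have στe : σ * (τ * (f * e)) = h * e := by rw [← mul_assoc, h1, sfe]
  have sas : s * a * s = σ * a * σ := by
    have : τ * a * τ = a := by rw [τa, mul_assoc, hτ, mul_one]
    calc s * a * s = σ * (τ * a * τ) * σ := by rw [← h1]; nth_rw 2 [h1]; rw [← h2]; noncomm_ring
      _ = _ := by rw [this]
  have σgσ : σ * g * σ = g := by rw [σg, mul_assoc, hσ, mul_one]
  have στσ : σ * τ * σ = τ := by rw [h1, hs2]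
  have hg2 : g = τ * b * τ - h * e - e * h + e * (b + D) * h * e + τ := by
    calc g = σ * g * σ := σgσ.symm
      _ = (σ * s) * b * (s * σ) - (σ * τ) * (f * (e * σ)) - (σ * e) * f * (τ * σ)
          + (σ * e) * h * τ * h * (e * σ) + σ * τ * σ := by rw [hg]; noncomm_ring
      _ = _ := by rw [hs1, hs2, στσ, eσ, σe, h1, h2, sfe, efs, m4]
  have hc2 : c = σ * a * σ - (b + D) * e - e * (b + D) + e * (b + D) * f * e + σ := by
    rw [← sas, hc, m1, m2]
  have tct : τ * c * τ = σ * a * σ - h * e - e * h + e * (b + D) * f * e + σ := by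
    calc τ * c * τ = (τ * s) * a * (s * τ) - (τ * ((b + D) * (e * τ))) - (τ * e) * (b + D) * τ
          + (τ * e) * (b + D) * f * (e * τ) + τ * σ * τ := by rw [hc2, ← sas]; noncomm_ring
      _ = _ := by rw [hs3, hs4, τe, eτ, ← he, ← eh, h2, hs4]
  have gg : s * b * s = τ * b * τ - h * e - e * h + τ * (f * e) + e * f * τ := by
    have := hg.symm.trans hg2
    rw [m4] at this
    rw [← sub_eq_zero] at this ⊢
    rw [← this]; noncomm_ring
  have sbs : σ * b * σ = b - e * (b + D) - (b + D) * e + f * e + e * f := by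
    calc σ * b * σ = (τ * s) * b * (s * τ) := by rw [hs3, hs4]
      _ = τ * (s * b * s) * τ := by noncomm_ring
      _ = (τ * τ) * b * (τ * τ) - τ * h * (e * τ) - (τ * e) * h * τ + (τ * τ) * (f * (e * τ))
          + (τ * e) * f * (τ * τ) := by rw [gg]; noncomm_ring
      _ = _ := by rw [hτ, eτ, τe, m3, m4]; noncomm_ring
  refine ⟨?_, ?_, ?_, ?_, ?_, ?_⟩
  · have : σ * b = (σ * b * σ) * σ := by rw [mul_assoc _ σ σ, hσ, mul_one]
    rw [this, sbs]
    have : (b - e * (b + D) - (b + D) * e + f * e + e * f) * σ = 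
      b * σ - e * (b + D) * σ - (b + D) * (e * σ) + f * (e * σ) + e * f * σ := by noncomm_ring
    rw [this, eσ, m2, ← ef]; noncomm_ring
  · calc σ * c = (σ * σ) * a * σ - σ * ((b + D) * e) - (σ * e) * (b + D)
          + (σ * e) * (b + D) * f * e + σ * σ := by rw [hc2]; noncomm_ring
      _ = _ := by rw [hσ, σe, ← fe]; noncomm_ring
  · calc c * σ = σ * a * (σ * σ) - (b + D) * (e * σ) - e * (b + D) * σ
          + e * (b + D) * f * (e * σ) + σ * σ := by rw [hc2]; noncomm_ring
      _ = _ := by rw [hσ, eσ, ← ef]; noncomm_ring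
  · have : τ * c = (τ * c * τ) * τ := by rw [mul_assoc _ τ τ, hτ, mul_one]
    have h3 : (τ * c * τ) = c + (b + D) * e + e * (b + D) - h * e - e * h := by
      rw [tct, hc2]; noncomm_ring
    rw [this, h3]
    have : (c + (b + D) * e + e * (b + D) - h * e - e * h) * τ = 
      c * τ + (b + D) * (e * τ) + e * (b + D) * τ - h * (e * τ) - e * h * τ := by noncomm_ring
    rw [this, eτ, m4, ← eh]; noncomm_ring
  · calc τ * g = (τ * τ) * b * τ - τ * h * e - (τ * e) * h
          + (τ * e) * (b + D) * h * e + τ * τ := by rw [hg2]; noncomm_ring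
      _ = _ := by rw [hτ, τe, m3]; noncomm_ring
  · calc g * τ = τ * b * (τ * τ) - h * (e * τ) - e * h * τ
          + e * (b + D) * h * (e * τ) + τ * τ := by rw [hg2]; noncomm_ring
      _ = _ := by rw [hτ, eτ, m4]; noncomm_ring


theorem nc_sigma {A : Type*} [Ring A] {a b c e f σ D : A}
    (hD : ∀ x, D * x = x * D) (ab : a * b = b * a) (ac : a * c = c * a) (bc : b * c = c * b)
    (ea : e * a = a * e) (fc : f * c = c * f) (eb : e * b = -(e * c))
    (fa : f * a = -(f * b)) (af : a * f = -(b * f))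
    (m1 : σ * f * e = (b + D) * e) (m2 : e * f * σ = e * (b + D))
    (r1 : σ * b - b * σ = f * e + e * (b + D) - (b + D) * e - e * f)
    (r2 : σ * c = a * σ + 1 - f * e - e * (b + D) + e * (b + D) * f * e)
    (r3 : c * σ = σ * a + 1 - (b + D) * e - e * f + e * (b + D) * f * e) :
    σ * (a + b + c) = (a + b + c) * σ ∧
    σ * ((a + b) * (b + c)) = ((a + b) * (b + c)) * σ ∧
    (σ * b - b * σ) * ((a + b) * (b + c)) = 0 ∧
    (σ * c - a * σ - 1) * ((a + b) * (b + c)) = 0 ∧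
    (c * σ - σ * a - 1) * ((a + b) * (b + c)) = 0 := by
  have hX0 : e * (b + D) * f * e = e * f * ((b + D) * e) := by
    rw [← m1, ← m2]; noncomm_ring
  have hX : e * b * f * e = e * f * b * e := by
    linear_combination (norm := noncomm_ring) hX0 - e * hD f * e
  have hXa : e * (b + D) * f * e * a = a * (e * (b + D) * f * e) := by
    have h1 : a * (e * f * ((b + D) * e)) = -(e * b * f * (b + D) * e) := by
      linear_combination (norm := noncomm_ring) -(ea * f * (b + D) * e) + e * af * (b + D) * e
    have h2 : e * (b + D) * f * e * a = -(e * (b + D) * f * b * e) := by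
      linear_combination (norm := noncomm_ring) e * (b + D) * f * ea + e * (b + D) * fa * e
    rw [h2, hX0, h1]
    linear_combination (norm := noncomm_ring) hX * D - e * hD (f * b * e) + e * b * f * hD e
  have k1 : e * (b + c) = 0 := by linear_combination (norm := noncomm_ring) eb
  have bD : b * D = D * b := (hD b).symm
  have k2 : e * (b + D) * (b + c) = 0 := by
    linear_combination (norm := noncomm_ring) k1 * (b + D) + e * bc + e * hD (b + c)
  have k3 : f * (a + b) = 0 := by linear_combination (norm := noncomm_ring) fa
  have k4 : (b + D) * e * a = a * (b + D) * e := by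
    linear_combination (norm := noncomm_ring) (b + D) * ea - ab * e + hD a * e
  have k5 : e * f * c = a * e * f := by
    linear_combination (norm := noncomm_ring) e * fc + k1 * f - e * af + ea * f
  have R : (f * e + e * (b + D) - (b + D) * e - e * f) * (a + b + c)
      + (1 - f * e - e * (b + D) + e * (b + D) * f * e) * a
      - a * (1 - (b + D) * e - e * f + e * (b + D) * f * e) = 0 := by
    linear_combination (norm := noncomm_ring) f * k1 + k2 - (b + D) * k1 - e * k3 - k4 - k5 + hXa
  have hp : σ * (a + b + c) = (a + b + c) * σ := by
    linear_combination (norm := noncomm_ring) r1 + r2 - r3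
  have eK : e * ((a + b) * (b + c)) = 0 := by
    linear_combination (norm := noncomm_ring) k1 * (a + b) + e * ab + e * ac + e * bc
  have fK : f * ((a + b) * (b + c)) = 0 := by
    linear_combination (norm := noncomm_ring) k3 * (b + c)
  have ebK : e * (b + D) * ((a + b) * (b + c)) = 0 := by
    linear_combination (norm := noncomm_ring) eK * (b + D) - e * (ab * (b + c))
      + e * (a + b) * bc + e * hD ((a + b) * (b + c))
  refine ⟨hp, ?_, ?_, ?_, ?_⟩
  · linear_combination (norm := noncomm_ring) r1 * (a + b + c) + b * hp + σ * ab - ab * σ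
      + σ * ac + r2 * a - a * r3 + R
  · rw [r1]
    linear_combination (norm := noncomm_ring) f * eK + ebK - (b + D) * eK - e * fK
  · rw [r2]
    linear_combination (norm := noncomm_ring) - f * eK - ebK + e * (b + D) * f * eK
  · rw [r3]
    linear_combination (norm := noncomm_ring) - (b + D) * eK - e * fK + e * (b + D) * f * eK

theorem nc_tau {A : Type*} [Ring A] {b c g e h τ D : A}
    (hD : ∀ x, D * x = x * D) (gb : g * b = b * g) (gc : g * c = c * g) (bc : b * c = c * b)
    (eg : e * g = g * e) (hb : h * b = b * h) (eb : e * b = -(e * c)) (be : b * e = -(c * e))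
    (hc : h * c = -(h * g)) (ch : c * h = -(g * h))
    (m3 : τ * h * e = (b + D) * e) (m4 : e * h * τ = e * (b + D))
    (r4 : τ * c - c * τ = (b + D) * e + e * h - h * e - e * (b + D))
    (r5 : τ * g = b * τ + 1 - (b + D) * e - e * h + e * (b + D) * h * e)
    (r6 : g * τ = τ * b + 1 - h * e - e * (b + D) + e * (b + D) * h * e) :
    τ * (b + c + g) = (b + c + g) * τ ∧
    τ * ((b + c) * (c + g)) = ((b + c) * (c + g)) * τ ∧
    (τ * c - c * τ) * ((b + c) * (c + g)) = 0 ∧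
    (τ * g - b * τ - 1) * ((b + c) * (c + g)) = 0 ∧
    (g * τ - τ * b - 1) * ((b + c) * (c + g)) = 0 := by
  have hX0 : e * (b + D) * h * e = e * h * ((b + D) * e) := by
    rw [← m3, ← m4]; noncomm_ring
  have hX : e * b * h * e = e * h * b * e := by
    linear_combination (norm := noncomm_ring) hX0 - e * hD h * e
  have k1 : e * (c + b) = 0 := by linear_combination (norm := noncomm_ring) eb
  have hXg : g * (e * (b + D) * h * e) = e * (b + D) * h * e * g := by
    have h1 : g * (e * (b + D) * h * e) = e * b * (b + D) * h * e := by
      linear_combination (norm := noncomm_ring) -(eg * (b + D) * h * e) + e * gb * h * e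
        - e * hD g * h * e + e * (b + D) * ch * e
        - e * bc * h * e - e * hD c * h * e - k1 * (b + D) * h * e
    have h2 : e * (b + D) * h * e * g = e * (b + D) * h * b * e := by
      linear_combination (norm := noncomm_ring) e * (b + D) * h * eg + e * (b + D) * hc * e
        - e * (b + D) * h * be
    rw [h2, h1]
    linear_combination (norm := noncomm_ring) e * b * hD (h * e) - e * hD (h * b * e) + hX * D
      - e * b * hb * e
  have k2 : e * (b + D) * (c + b) = 0 := by
    linear_combination (norm := noncomm_ring) k1 * (b + D) + e * bc + e * hD (b + c)
  have k3 : h * (g + c) = 0 := by linear_combination (norm := noncomm_ring) hc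
  have k4 : (b + D) * e * g = g * (b + D) * e := by
    linear_combination (norm := noncomm_ring) (b + D) * eg - gb * e + hD g * e
  have k5 : e * h * b = g * e * h := by
    linear_combination (norm := noncomm_ring) e * hb + k1 * h - e * ch + eg * h
  have R : ((b + D) * e + e * h - h * e - e * (b + D)) * (g + c + b)
      + g * (1 - (b + D) * e - e * h + e * (b + D) * h * e)
      - (1 - h * e - e * (b + D) + e * (b + D) * h * e) * g = 0 := by
    linear_combination (norm := noncomm_ring) (b + D) * k1 + k4 + e * k3 + k5 - h * k1 - k2 + hXg
  have hp : τ * (b + c + g) = (b + c + g) * τ := by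
    linear_combination (norm := noncomm_ring) r4 + r5 - r6
  have hK : h * ((b + c) * (c + g)) = 0 := by
    linear_combination (norm := noncomm_ring) k3 * (b + c) + h * bc - h * gb - h * gc
  have eK : e * ((b + c) * (c + g)) = 0 := by
    linear_combination (norm := noncomm_ring) k1 * (c + g)
  have ebK : e * (b + D) * ((b + c) * (c + g)) = 0 := by
    linear_combination (norm := noncomm_ring) k2 * (c + g)
  refine ⟨hp, ?_, ?_, ?_, ?_⟩
  · linear_combination (norm := noncomm_ring) r4 * (b + c + g) + c * hp + gb * τ + τ * bc
      - bc * τ + g * r5 - r6 * g + R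
  · rw [r4]
    linear_combination (norm := noncomm_ring) (b + D) * eK + e * hK - h * eK - ebK
  · rw [r5]
    linear_combination (norm := noncomm_ring) - (b + D) * eK - e * hK + e * (b + D) * h * eK
  · rw [r6]
    linear_combination (norm := noncomm_ring) - h * eK - ebK + e * (b + D) * h * eK


theorem jm_exists_hom {A : Type*} [Ring A] [Algebra ℂ A] (N : ℕ → A)
    (hN : ∀ i j, N i * N j = N j * N i) :
    ∃ φ : MvPolynomial ℕ ℂ →ₐ[ℂ] A, ∀ i, φ (X i) = N i := by
  letI : CommRing (Algebra.adjoin ℂ (Set.range N)) :=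
    Algebra.adjoinCommRingOfComm ℂ (by rintro _ ⟨i, rfl⟩ _ ⟨j, rfl⟩; exact hN i j)
  let n : ℕ → Algebra.adjoin ℂ (Set.range N) := fun i =>
    ⟨N i, Algebra.subset_adjoin ⟨i, rfl⟩⟩
  refine ⟨(Algebra.adjoin ℂ (Set.range N)).val.comp (aeval n), fun i => ?_⟩
  simp [n]

theorem dvd_of_subst (j k : ℕ) (q : MvPolynomial ℕ ℂ)
    (h : aeval (fun i => if i = j then -X k else (X i : MvPolynomial ℕ ℂ)) q = 0) :
    (X j + X k : MvPolynomial ℕ ℂ) ∣ q := by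
  rw [← Ideal.mem_span_singleton, ← Ideal.Quotient.eq_zero_iff_mem]
  have : (Ideal.Quotient.mkₐ ℂ (Ideal.span {(X j + X k : MvPolynomial ℕ ℂ)})).comp
      (aeval (fun i => if i = j then -X k else (X i : MvPolynomial ℕ ℂ))) =
      Ideal.Quotient.mkₐ ℂ (Ideal.span {(X j + X k : MvPolynomial ℕ ℂ)}) := by
    ext i
    simp only [AlgHom.comp_apply, aeval_X]
    split_ifs with hi
    · subst hi
      symm
      rw [← sub_eq_zero, ← map_sub, sub_neg_eq_add]
      exact Ideal.Quotient.eq_zero_iff_mem.2 (Ideal.mem_span_singleton_self _)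
    · rfl
  have h2 := congrArg (fun F => F q) this
  simp only [AlgHom.comp_apply, h, map_zero] at h2
  exact h2.symm

theorem cancel_12 {p : MvPolynomial ℕ ℂ}
    (hp : ∀ y y' : ℂ,
    bind₁ (fun i => if i = 1 then C y else if i = 2 then C (-y) else X i) p =
      bind₁ (fun i => if i = 1 then C y' else if i = 2 then C (-y') else X i) p)
    {B : Type*} [CommRing B] [Algebra ℂ B] (h : ℕ → B) (hh : h 2 = - h 1) :
    aeval h p = aeval (fun i => if i = 1 then 0 else if i = 2 then 0 else h i) p := by
  let F : ℕ → Polynomial (MvPolynomial ℕ ℂ) := fun i =>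
    if i = 1 then Polynomial.X else if i = 2 then -Polynomial.X else Polynomial.C (X i)
  let G : ℕ → Polynomial (MvPolynomial ℕ ℂ) := fun i =>
    if i = 1 then 0 else if i = 2 then 0 else Polynomial.C (X i)
  have key : aeval F p = aeval G p := by
    apply Polynomial.eq_of_infinite_eval_eq
    refine Set.Infinite.mono ?_ (Set.infinite_range_of_injective (C_injective ℕ ℂ))
    rintro _ ⟨y, rfl⟩
    have e1 : ∀ H : ℕ → Polynomial (MvPolynomial ℕ ℂ), Polynomial.eval (C y) (aeval H p) =
        bind₁ (fun i => Polynomial.eval (C y) (H i)) p := by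
      intro H
      let E : Polynomial (MvPolynomial ℕ ℂ) →ₐ[ℂ] MvPolynomial ℕ ℂ :=
        (Polynomial.aeval (R := MvPolynomial ℕ ℂ) (C y : MvPolynomial ℕ ℂ)).restrictScalars ℂ
      have : ∀ z, E z = Polynomial.eval (C y) z := fun z => by simp [E, Polynomial.coe_aeval_eq_eval]
      rw [← this, ← AlgHom.comp_apply, comp_aeval]
      simp only [this]; rfl
    rw [Set.mem_ofPred_eq, e1, e1]
    have := hp y 0
    convert this using 3
    · funext i; simp only [F]; split_ifs <;> simp
    · funext i; simp only [G]; split_ifs <;> simp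
  let E : Polynomial (MvPolynomial ℕ ℂ) →+* B :=
    Polynomial.eval₂RingHom (aeval h : MvPolynomial ℕ ℂ →ₐ[ℂ] B).toRingHom (h 1)
  have hEc : ∀ z : ℂ, E (algebraMap ℂ (Polynomial (MvPolynomial ℕ ℂ)) z) = algebraMap ℂ B z := by
    intro z
    have : algebraMap ℂ (Polynomial (MvPolynomial ℕ ℂ)) z = Polynomial.C (C z) := rfl
    rw [this]
    simp [E]
  let E' : Polynomial (MvPolynomial ℕ ℂ) →ₐ[ℂ] B := { E with commutes' := hEc }
  have e2 := congrArg E' key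
  have hE : ∀ z, E' z = Polynomial.eval₂ (aeval h : MvPolynomial ℕ ℂ →ₐ[ℂ] B).toRingHom (h 1) z :=
    fun z => rfl
  rw [← AlgHom.comp_apply, ← AlgHom.comp_apply, comp_aeval, comp_aeval] at e2
  convert e2 using 3
  · funext i; rw [hE]; simp only [F]; split_ifs with h1 h2
    · simp [h1]
    · simp [h2, hh]
    · simp
  · funext i; rw [hE]; simp only [G]; split_ifs with h1 h2 <;> simp

theorem sym_decomp (x z : ℕ) (hxz : x ≠ z) (S : Subalgebra ℂ (MvPolynomial ℕ ℂ))
    (hS : ∀ q ∈ S, rename (Equiv.swap x z) q = q)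
    (h0 : ∀ i, i ≠ x → i ≠ z → X i ∈ S) (h1 : X x + X z ∈ S) (h2 : X x * X z ∈ S)
    (q : MvPolynomial ℕ ℂ) (hq : rename (Equiv.swap x z) q = q) : q ∈ S := by
  have : ∀ q : MvPolynomial ℕ ℂ, ∃ s ∈ S, ∃ t ∈ S, q = s + X x * t := by
    intro q
    induction q using MvPolynomial.induction_on with
    | C a => exact ⟨C a, S.algebraMap_mem a, 0, S.zero_mem, by simp⟩
    | add p q hp hq =>
      obtain ⟨s, hs, t, ht, rfl⟩ := hp
      obtain ⟨s', hs', t', ht', rfl⟩ := hq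
      exact ⟨s + s', S.add_mem hs hs', t + t', S.add_mem ht ht', by ring⟩
    | mul_X p i hp =>
      obtain ⟨s, hs, t, ht, rfl⟩ := hp
      by_cases hix : i = x
      · subst hix
        exact ⟨-(X i * X z * t), S.neg_mem (S.mul_mem h2 ht), s + (X i + X z) * t,
          S.add_mem hs (S.mul_mem h1 ht), by ring⟩
      by_cases hiz : i = z
      · subst hiz
        exact ⟨(X x + X i) * s + X x * X i * t,
          S.add_mem (S.mul_mem h1 hs) (S.mul_mem h2 ht), -s, S.neg_mem hs, by ring⟩
      · exact ⟨s * X i, S.mul_mem hs (h0 i hix hiz), t * X i, S.mul_mem ht (h0 i hix hiz), by ring⟩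
  obtain ⟨s, hs, t, ht, rfl⟩ := this q
  rw [map_add, map_mul, hS s hs, hS t ht, rename_X, Equiv.swap_apply_left] at hq
  have h3 : (X z - X x : MvPolynomial ℕ ℂ) * t = 0 := by linear_combination hq
  rcases mul_eq_zero.1 h3 with h | h
  · exact absurd (X_injective (sub_eq_zero.1 h)) hxz.symm
  · rw [h]; simpa using hs

theorem mvEval_eq {A : Type*} [Ring A] [Algebra ℂ A] (N : ℕ → A)
    (φ : MvPolynomial ℕ ℂ →ₐ[ℂ] A) (hφ : ∀ i, φ (X i) = N i) (p : MvPolynomial ℕ ℂ) :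
    ∑ m ∈ p.support,
    p.coeff m • ((m.support.sort (· ≤ ·)).map (fun i => N i ^ m i)).prod = φ p := by
  conv_rhs => rw [p.as_sum, map_sum]
  refine Finset.sum_congr rfl fun m _ => ?_
  have : monomial m (p.coeff m) = p.coeff m • ((m.support.sort (· ≤ ·)).map (fun i => (X i : MvPolynomial ℕ ℂ) ^ m i)).prod := by
    rw [monomial_eq, smul_eq_C_mul, Finsupp.prod]
    congr 1
    rw [← Finset.prod_map_toList]
    exact ((Finset.sort_perm_toList _ _).symm.map _).prod_eq
  rw [this, map_smul, map_list_prod, List.map_map]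
  congr 3
  ext i
  simp [hφ]

theorem cancel_jk {r : ℕ} {p : MvPolynomial ℕ ℂ} (hp : IsSupersymmetric r p)
    {j k : ℕ} (hj : j % 2 = 1) (hk : k % 2 = 0) (hjr : j ≤ r) (hk0 : 1 ≤ k) (hkr : k ≤ r)
    {B : Type*} [CommRing B] [Algebra ℂ B] (h : ℕ → B) (hh : h k = - h j) :
    aeval h p = aeval (fun i => if i = j ∨ i = k then 0 else h i) p := by
  obtain ⟨-, hs, hc⟩ := hp
  set π : Equiv.Perm ℕ := Equiv.swap 1 j * Equiv.swap 2 k with hπ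
  have p1 : π 1 = j := by
    rw [hπ, Equiv.Perm.mul_apply, Equiv.swap_apply_of_ne_of_ne (a := 2) (by omega) (by omega),
      Equiv.swap_apply_left]
  have p2 : π 2 = k := by
    rw [hπ, Equiv.Perm.mul_apply, Equiv.swap_apply_left,
      Equiv.swap_apply_of_ne_of_ne (by omega) (by omega)]
  have hr := hs π (by
      intro i
      simp only [hπ, Equiv.Perm.mul_apply, Equiv.swap_apply_def]
      split_ifs <;> omega) (by
      intro i hi
      rw [Set.mem_Icc] at hi
      rw [hπ, Equiv.Perm.mul_apply, Equiv.swap_apply_of_ne_of_ne (a := 2) (by omega) (by omega),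
        Equiv.swap_apply_of_ne_of_ne (by omega) (by omega)])
  have key : ∀ H : ℕ → B, aeval H p = aeval (H ∘ π) p := fun H => by
    conv_lhs => rw [← hr]
    rw [aeval_rename]
  rw [key h, key (fun i => if i = j ∨ i = k then 0 else h i),
    cancel_12 hc (h ∘ π) (by simp only [Function.comp, p1, p2, hh])]
  congr 2
  funext i
  simp only [Function.comp]
  by_cases h1 : i = 1
  · subst h1; simp [p1]
  by_cases h2 : i = 2
  · subst h2; simp [p2]
  have h3 : π i ≠ j := fun h => h1 (π.injective (h.trans p1.symm))
  have h4 : π i ≠ k := fun h => h2 (π.injective (h.trans p2.symm))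
  simp [h1, h2, h3, h4]

theorem comm_aeval {A : Type*} [Ring A] [Algebra ℂ A] (φ : MvPolynomial ℕ ℂ →ₐ[ℂ] A) (σ : A)
    (H : ℕ → MvPolynomial ℕ ℂ) (hH : ∀ i, σ * φ (H i) = φ (H i) * σ) (p : MvPolynomial ℕ ℂ) :
    σ * φ (aeval H p) = φ (aeval H p) * σ := by
  induction p using MvPolynomial.induction_on with
  | C a =>
    rw [← algebraMap_eq, AlgHom.commutes, AlgHom.commutes]
    exact (Algebra.commutes a σ).symm
  | add p q hp hq => simp only [map_add, mul_add, add_mul, hp, hq]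
  | mul_X p i hp =>
    rw [map_mul, map_mul, aeval_X, ← mul_assoc, hp, mul_assoc, hH, mul_assoc]

theorem comm_e {A : Type*} [Ring A] [Algebra ℂ A] (φ : MvPolynomial ℕ ℂ →ₐ[ℂ] A) (e : A)
    (p : MvPolynomial ℕ ℂ) (j k : ℕ)
    (hcan : ∀ h : ℕ → MvPolynomial ℕ ℂ, h k = - h j →
      aeval h p = aeval (fun i => if i = j ∨ i = k then 0 else h i) p)
    (hjk : j ≠ k)
    (hc : ∀ i, i ≠ j → i ≠ k → e * φ (X i) = φ (X i) * e)
    (h1 : e * φ (X j + X k) = 0) (h2 : φ (X j + X k) * e = 0) :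
    e * φ p = φ p * e := by
  set q := aeval (fun i => if i = j ∨ i = k then 0 else (X i : MvPolynomial ℕ ℂ)) p with hq
  have hd : (X j + X k : MvPolynomial ℕ ℂ) ∣ p - q := by
    apply dvd_of_subst
    rw [map_sub, hq, hcan _ (by simp [hjk.symm]), sub_eq_zero, ← AlgHom.comp_apply, comp_aeval]
    congr 2
    funext i
    by_cases hi : i = j ∨ i = k
    · simp [hi]
    · push Not at hi
      simp [hi]
  obtain ⟨t, ht⟩ := hd
  have hcq : e * φ q = φ q * e := by
    apply comm_aeval
    intro i
    split_ifs with hi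
    · simp
    · push Not at hi
      exact hc i hi.1 hi.2
  have hpq : p = q + (X j + X k) * t := by rw [← ht]; ring
  have h3 : e * φ ((X j + X k) * t) = 0 := by rw [map_mul, ← mul_assoc, h1, zero_mul]
  have h4 : φ ((X j + X k) * t) * e = 0 := by
    rw [mul_comm, map_mul, mul_assoc, h2, mul_zero]
  rw [hpq, map_add, mul_add, h3, add_mul (φ q), h4, hcq]

theorem comm_sigma {A : Type*} [Ring A] [Algebra ℂ A] (φ : MvPolynomial ℕ ℂ →ₐ[ℂ] A) (σ : A)
    (p : MvPolynomial ℕ ℂ) (x y z : ℕ) (hxy : x ≠ y) (hyz : y ≠ z) (hxz : x ≠ z)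
    (hsym : rename (Equiv.swap x z) p = p)
    (hcan1 : ∀ h : ℕ → MvPolynomial ℕ ℂ, h y = - h x →
      aeval h p = aeval (fun i => if i = x ∨ i = y then 0 else h i) p)
    (hcan2 : ∀ h : ℕ → MvPolynomial ℕ ℂ, h y = - h z →
      aeval h p = aeval (fun i => if i = z ∨ i = y then 0 else h i) p)
    (hc : ∀ i, i ≠ x → i ≠ y → i ≠ z → σ * φ (X i) = φ (X i) * σ)
    (hp1 : σ * φ (X x + X y + X z) = φ (X x + X y + X z) * σ)
    (hK : σ * φ ((X x + X y) * (X y + X z)) = φ ((X x + X y) * (X y + X z)) * σ)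
    (hy : (σ * φ (X y) - φ (X y) * σ) * φ ((X x + X y) * (X y + X z)) = 0)
    (h3 : (σ * φ (X z) - φ (X x) * σ - 1) * φ ((X x + X y) * (X y + X z)) = 0)
    (h4 : (φ (X z) * σ - σ * φ (X x) - 1) * φ ((X x + X y) * (X y + X z)) = 0) :
    σ * φ p = φ p * σ := by
  set K : MvPolynomial ℕ ℂ := (X x + X y) * (X y + X z) with hKdef
  have hzx : z ≠ x := hxz.symm
  have hyx : y ≠ x := hxy.symm
  have hzy : z ≠ y := hyz.symm
  let F : ℕ → MvPolynomial ℕ ℂ := fun i =>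
    if i = x ∨ i = y then 0 else if i = z then X x + X y + X z else X i
  have hsym2 : ∀ H : ℕ → MvPolynomial ℕ ℂ, aeval H p = aeval (H ∘ Equiv.swap x z) p := fun H => by
    conv_lhs => rw [← hsym]
    rw [aeval_rename]
  set q := aeval F p with hq
  have hd : (X y + X x : MvPolynomial ℕ ℂ) ∣ p - q := by
    apply dvd_of_subst
    rw [map_sub, hq, hcan1 _ (by simp [hxy]), sub_eq_zero, ← AlgHom.comp_apply, comp_aeval]
    congr 2
    funext i
    by_cases hi : i = x ∨ i = y
    · simp [hi, F]
    · by_cases hiz : i = z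
      · subst hiz
        simp [F, hzx, hzy, hxy]
      · push Not at hi
        simp [hi, F, hiz]
  obtain ⟨w, hw⟩ := hd
  have hd2 : (X y + X z : MvPolynomial ℕ ℂ) ∣ w := by
    apply dvd_of_subst
    have h5 := congrArg (aeval (fun i => if i = y then -X z else (X i : MvPolynomial ℕ ℂ))) hw
    have h6 : aeval (fun i => if i = y then -X z else (X i : MvPolynomial ℕ ℂ)) (p - q) = 0 := by
      rw [map_sub, hq, hcan2 _ (by simp [hzy]), sub_eq_zero, ← AlgHom.comp_apply, comp_aeval,
        hsym2]
      congr 2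
      funext i
      by_cases hix : i = x
      · subst hix; simp [F]
      by_cases hiz : i = z
      · subst hiz; simp [F, hzx, hzy, hxy, hxz]
      by_cases hiy : i = y
      · subst hiy; simp [F, Equiv.swap_apply_of_ne_of_ne hyx hyz]
      · simp [F, Equiv.swap_apply_of_ne_of_ne hix hiz, hix, hiz, hiy]
    rw [h6, map_mul, map_add, aeval_X, aeval_X, if_pos rfl, if_neg hxy] at h5
    rcases mul_eq_zero.1 h5.symm with h | h
    · exact absurd (X_injective (neg_add_eq_zero.1 h)) hzx
    · exact h
  obtain ⟨t, rfl⟩ := hd2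
  have hpq : p = q + t * K := by
    rw [hKdef]; linear_combination hw
  have hK0 : K ≠ 0 := by
    rw [hKdef]
    have : ∀ u v : ℕ, u ≠ v → (X u + X v : MvPolynomial ℕ ℂ) ≠ 0 := by
      intro u v huv h
      have := congrArg (eval (fun i => if i = u then (1:ℂ) else 0)) h
      simp [huv.symm] at this
    exact mul_ne_zero (this _ _ hxy) (this _ _ hyz)
  have hKs : rename (Equiv.swap x z) K = K := by
    rw [hKdef]
    simp only [map_mul, map_add, rename_X, Equiv.swap_apply_left, Equiv.swap_apply_right,
      Equiv.swap_apply_of_ne_of_ne hyx hyz]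
    ring
  have hqs : rename (Equiv.swap x z) q = q := by
    have : rename (Equiv.swap x z) q = aeval (fun i => rename (Equiv.swap x z) (F i)) p := by
      rw [hq, ← AlgHom.comp_apply, comp_aeval]
    rw [this, hq]
    congr 2
    funext i
    simp only [F]
    split_ifs with hi hiz
    · simp
    · simp only [map_add, rename_X, Equiv.swap_apply_left, Equiv.swap_apply_right,
        Equiv.swap_apply_of_ne_of_ne hyx hyz]
      ring
    · push Not at hi
      rw [rename_X, Equiv.swap_apply_of_ne_of_ne hi.1 hiz]
  have hts : rename (Equiv.swap x z) t = t := by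
    have h5 := hsym
    rw [hpq, map_add, map_mul, hqs, hKs, add_right_inj] at h5
    exact mul_right_cancel₀ hK0 h5
  have hcq : σ * φ q = φ q * σ := by
    apply comm_aeval
    intro i
    simp only [F]
    split_ifs with hi hiz
    · simp
    · exact hp1
    · push Not at hi
      exact hc i hi.1 hi.2 hiz
  let S : Subalgebra ℂ (MvPolynomial ℕ ℂ) :=
    { carrier := {u | rename (Equiv.swap x z) u = u ∧ (σ * φ u - φ u * σ) * φ K = 0}
      mul_mem' := by
        rintro u v ⟨hu, hu'⟩ ⟨hv, hv'⟩
        refine ⟨by rw [map_mul, hu, hv], ?_⟩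
        have h5 : φ K * φ v = φ v * φ K := by rw [← map_mul, ← map_mul, mul_comm]
        rw [map_mul]
        linear_combination (norm := noncomm_ring) hu' * φ v + φ u * hv' - σ * φ u * h5
          + φ u * σ * h5
      add_mem' := by
        rintro u v ⟨hu, hu'⟩ ⟨hv, hv'⟩
        refine ⟨by rw [map_add, hu, hv], ?_⟩
        rw [map_add]
        linear_combination (norm := noncomm_ring) hu' + hv'
      algebraMap_mem' := by
        intro a
        refine ⟨by simp, ?_⟩
        rw [AlgHom.commutes, Algebra.commutes a σ, sub_self, zero_mul] }
  have htS : t ∈ S := by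
    apply sym_decomp x z hxz S (fun q hq => hq.1) _ _ _ t hts
    · intro i hix hiz
      refine ⟨by rw [rename_X, Equiv.swap_apply_of_ne_of_ne hix hiz], ?_⟩
      by_cases hiy : i = y
      · rw [hiy]; exact hy
      · rw [hc i hix hiy hiz, sub_self, zero_mul]
    · refine ⟨by simp [add_comm], ?_⟩
      rw [map_add]
      linear_combination (norm := noncomm_ring) h3 - h4
    · refine ⟨by simp [mul_comm], ?_⟩
      have h5 : φ K * φ (X x) = φ (X x) * φ K := by rw [← map_mul, ← map_mul, mul_comm]
      have h6 : φ (X z) * φ (X x) = φ (X x) * φ (X z) := by rw [← map_mul, ← map_mul, mul_comm]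
      rw [map_mul]
      linear_combination (norm := noncomm_ring) h3 * φ (X x) - φ (X x) * h4
        - (σ * φ (X z) - φ (X x) * σ - 1) * h5 - σ * h6 * φ K
  have htS' := htS.2
  rw [hpq, map_add, map_mul]
  have h5 : φ K * φ t = φ t * φ K := by rw [← map_mul, ← map_mul, mul_comm]
  linear_combination (norm := noncomm_ring) hcq + htS' + φ t * hK

/-- Every supersymmetric polynomial in the normalised Jucys–Murphy elements
`N₁,…,N_r` lies in the center of the partition algebra `A_r(δ)`, for arbitrary
`δ ∈ ℂ`. -/
theorem supersymmetric_in_JM_is_central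
    {A : Type*} [Ring A] [Algebra ℂ A] (δ : ℂ) (r : ℕ)
    (P : PartitionAlgebraData A δ r)
    (p : MvPolynomial ℕ ℂ) (hp : IsSupersymmetric r p) :
    mvEvalAt P.N p ∈ Subalgebra.center ℂ A := by
  obtain ⟨hsup, hsymm, hcan⟩ := id hp
  have hNN : ∀ i j, P.N i * P.N j = P.N j * P.N i := by
    intro i j
    rw [P.N_def, P.N_def]
    have h1 := Algebra.commutes (δ / 2) (P.L i)
    have h2 := Algebra.commutes (δ / 2) (P.L j)
    linear_combination (norm := noncomm_ring) P.L_comm i j + h1 - h2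
  obtain ⟨φ, hφ⟩ := jm_exists_hom P.N hNN
  have hev : mvEvalAt P.N p = φ p := mvEval_eq P.N φ hφ p
  rw [hev]
  have cjk : ∀ j k : ℕ, 1 ≤ j → 1 ≤ k → j ≤ r → k ≤ r → (j + k) % 2 = 1 →
      ∀ h : ℕ → MvPolynomial ℕ ℂ, h k = - h j →
      aeval h p = aeval (fun i => if i = j ∨ i = k then 0 else h i) p := by
    intro j k hj hk hjr hkr hjk h hh
    rcases Nat.mod_two_eq_zero_or_one j with h0 | h0
    · rw [cancel_jk hp (j := k) (k := j) (by omega) h0 hkr hj hjr h (by rw [hh, neg_neg])]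
      simp only [or_comm]
    · exact cancel_jk hp h0 (by omega) hjr hk hkr h hh
  have sw : ∀ j : ℕ, 1 ≤ j → j + 2 ≤ r → rename (Equiv.swap j (j + 2)) p = p := by
    intro j hj hjr
    apply hsymm
    · intro i
      simp only [Equiv.swap_apply_def]
      split_ifs <;> omega
    · intro i hi
      rw [Set.mem_Icc] at hi
      exact Equiv.swap_apply_of_ne_of_ne (by omega) (by omega)
  have hE : ∀ i, 1 ≤ i → i ≤ r - 1 → P.e i * φ p = φ p * P.e i := by
    intro i hi hir
    obtain ⟨a1, a2⟩ := P.e_N_anti i hi hir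
    apply comm_e φ (P.e i) p i (i + 1) (cjk i (i + 1) hi (by omega) (by omega) (by omega) (by omega))
      (by omega)
    · intro j h1 h2
      rw [hφ]
      exact P.e_comm_N i j hi hir h1 h2
    · rw [map_add, hφ, hφ, mul_add, a1, neg_add_cancel]
    · rw [map_add, hφ, hφ, add_mul, a2, neg_add_cancel]
  have hSg : ∀ i, 1 ≤ i → 2 * i ≤ r - 2 → P.s i * φ p = φ p * P.s i := by
    intro i hi hir'
    have hir : 2 * i + 2 ≤ r := by omega
    have hL : P.L (2 * i) = P.N (2 * i) + algebraMap ℂ A (δ / 2) := by rw [P.N_def]; abel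
    have hD := Algebra.commutes (A := A) (δ / 2)
    obtain ⟨s1, s2⟩ := P.σσ_s i (by omega) (by omega)
    obtain ⟨e1, e2⟩ := P.σ_e_even i (by omega) (by omega)
    obtain ⟨e3, e4⟩ := P.σ_e_odd i (by omega) (by omega)
    obtain ⟨m1, m2⟩ := P.mixed_even i hi (by omega)
    obtain ⟨m3, m4⟩ := P.mixed_odd i hi (by omega)
    rw [hL] at m1 m2 m3 m4
    have hco := P.cox_odd i hi (by omega)
    have hce := P.cox_even i hi hir
    obtain ⟨r1, r2, r3, r4, r5, r6⟩ := nc_shared (P.σ_sq (2 * i) (by omega) (by omega))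
      (P.σ_sq (2 * i + 1) (by omega) (by omega)) s1 s2 e1 e2 e3 e4
      (P.σeven_comm_N i (2 * i + 2) (by omega) (by omega) (by omega) (by omega) (by omega))
      (P.σodd_comm_N i (2 * i - 1) (by omega) (by omega) (by omega) (by omega) (by omega))
      m1 m2 m3 m4 hco hce
    obtain ⟨a1, a2⟩ := P.e_N_anti (2 * i) (by omega) (by omega)
    obtain ⟨a3, a4⟩ := P.e_N_anti (2 * i - 1) (by omega) (by omega)
    obtain ⟨a5, a6⟩ := P.e_N_anti (2 * i + 1) (by omega) (by omega)
    rw [show 2 * i - 1 + 1 = 2 * i by omega] at a3 a4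
    obtain ⟨b1, b2, b3, b4, b5⟩ := nc_sigma hD (hNN (2 * i - 1) (2 * i))
      (hNN (2 * i - 1) (2 * i + 1)) (hNN (2 * i) (2 * i + 1))
      (P.e_comm_N (2 * i) (2 * i - 1) (by omega) (by omega) (by omega) (by omega))
      (P.e_comm_N (2 * i - 1) (2 * i + 1) (by omega) (by omega) (by omega) (by omega))
      a1 a3 a4 m1 m2 r1 r2 r3
    obtain ⟨c1, c2, c3, c4, c5⟩ := nc_tau hD (hNN (2 * i + 2) (2 * i))
      (hNN (2 * i + 2) (2 * i + 1)) (hNN (2 * i) (2 * i + 1))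
      (P.e_comm_N (2 * i) (2 * i + 2) (by omega) (by omega) (by omega) (by omega))
      (P.e_comm_N (2 * i + 1) (2 * i) (by omega) (by omega) (by omega) (by omega))
      a1 a2 a5 a6 m3 m4 r4 r5 r6
    have hσ : P.σ (2 * i) * φ p = φ p * P.σ (2 * i) := by
      have hsw := sw (2 * i - 1) (by omega) (by omega)
      rw [show 2 * i - 1 + 2 = 2 * i + 1 by omega] at hsw
      apply comm_sigma φ _ p (2 * i - 1) (2 * i) (2 * i + 1) (by omega) (by omega) (by omega) hsw
        (cjk _ _ (by omega) (by omega) (by omega) (by omega) (by omega))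
        (cjk _ _ (by omega) (by omega) (by omega) (by omega) (by omega))
      · intro j h1 h2 h3
        rw [hφ]
        exact P.σeven_comm_N i j (by omega) (by omega) h1 h2 h3
      all_goals simp only [map_add, map_mul, hφ]; assumption
    have hτ : P.σ (2 * i + 1) * φ p = φ p * P.σ (2 * i + 1) := by
      apply comm_sigma φ _ p (2 * i) (2 * i + 1) (2 * i + 2) (by omega) (by omega) (by omega)
        (sw (2 * i) (by omega) hir)
        (cjk _ _ (by omega) (by omega) (by omega) (by omega) (by omega))
        (cjk _ _ (by omega) (by omega) (by omega) (by omega) (by omega))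
      · intro j h1 h2 h3
        rw [hφ]
        exact P.σodd_comm_N i j (by omega) (by omega) h1 h2 h3
      all_goals simp only [map_add, map_mul, hφ]; assumption
    rw [← s1, mul_assoc, hτ, ← mul_assoc, hσ, mul_assoc]
  rw [Subalgebra.mem_center_iff]
  intro b
  have hb : b ∈ Algebra.adjoin ℂ
      ({a | ∃ i, 1 ≤ i ∧ i ≤ r - 1 ∧ a = P.e i} ∪
        {a | ∃ i, 1 ≤ i ∧ 2 * i ≤ r - 2 ∧ a = P.s i}) := by rw [P.gen]; trivial
  induction hb using Algebra.adjoin_induction with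
  | mem x hx =>
    rcases hx with ⟨i, h1, h2, rfl⟩ | ⟨i, h1, h2, rfl⟩
    · exact hE i h1 h2
    · exact hSg i h1 h2
  | algebraMap a => exact Algebra.commutes a _
  | add x y _ _ hx hy => rw [add_mul, mul_add, hx, hy]
  | mul x y _ _ hx hy => rw [mul_assoc, hy, ← mul_assoc, hx, mul_assoc]
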